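/- Let G=(V,E) be a multigraph without self-loops and let s ∈ V. If there exists a basic s-cycle packing of G of size σ, then there exists an s-cycle packing of G of size σ. -/

import Mathlib

/-- A multigraph on vertex type `V` with edge type `E`: each edge has an
unordered pair of endpoints.  Parallel edges are distinguished (they are
different elements of `E`), and self-loops are edges whose endpoint pair is
diagonal. -/
structure Multigraph (V : Type) (E : Type) where
  ends : E → Sym2 V

namespace Multigraph

variable {V E : Type}

/-- A multigraph has no self-loops. -/
def LoopFree (G : Multigraph V E) : Prop := ∀ e : E, ¬ (G.ends e).IsDiag

/-- The degree of a vertex: the number of incident edges (parallel edges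
counted with multiplicity). -/
noncomputable def degree (G : Multigraph V E) (v : V) : ℕ :=
  Nat.card {e : E // v ∈ G.ends e}

/-- A walk `(v₀, e₁, v₁, …, e_l, v_l)` of positive length `l ≥ 1` in which
each edge `eᵢ` joins `v_{i-1}` and `vᵢ`. -/
structure Walk (G : Multigraph V E) where
  len : ℕ
  len_pos : 0 < len
  verts : Fin (len + 1) → V
  edges : Fin len → E
  valid : ∀ i : Fin len, G.ends (edges i) = s(verts i.castSucc, verts i.succ)

namespace Walk

variable {G : Multigraph V E}

/-- The first vertex of a walk. -/
def start (W : G.Walk) : V := W.verts 0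

/-- The last vertex of a walk. -/
def finish (W : G.Walk) : V := W.verts (Fin.last W.len)

/-- A cycle: a closed walk of positive length with pairwise distinct edges and
pairwise distinct vertices (except that the first and last vertex coincide). -/
def IsCycle (W : G.Walk) : Prop :=
  W.start = W.finish ∧ Function.Injective W.edges ∧
    Function.Injective fun i : Fin W.len => W.verts i.castSucc

/-- An `s`-cycle: a walk with `v₀ = v_l = s`, with `vᵢ ≠ s` for `0 < i < l`,
with no U-turns (`eᵢ ≠ e_{i+1}`), and in which every edge occurs at most
twice. -/
def IsSCycle (W : G.Walk) (s : V) : Prop :=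
  W.start = s ∧ W.finish = s ∧
  (∀ i : Fin (W.len + 1), i ≠ 0 → i ≠ Fin.last W.len → W.verts i ≠ s) ∧
  (∀ i j : Fin W.len, (i : ℕ) + 1 = (j : ℕ) → W.edges i ≠ W.edges j) ∧
  (∀ e : E, Nat.card {i : Fin W.len // W.edges i = e} ≤ 2)

/-- The multiplicity of a vertex `v` in the multiset `V(W)` of vertices of a
walk `W`. -/
noncomputable def vertCount (W : G.Walk) (v : V) : ℕ :=
  Nat.card {i : Fin (W.len + 1) // W.verts i = v}

end Walk

/-- `S` is a feedback vertex set: every cycle of `G` meets `S`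
(equivalently, `G − S` contains no cycle). -/
def IsFVS (G : Multigraph V E) (S : Set V) : Prop :=
  ∀ W : G.Walk, W.IsCycle → ∃ i, W.verts i ∈ S

/-- The minimum size of a feedback vertex set. -/
noncomputable def fvs [Fintype V] (G : Multigraph V E) : ℕ :=
  sInf {n : ℕ | ∃ S : Set V, G.IsFVS S ∧ S.ncard = n}

/-- `x : V → ℝ≥0` is an `s`-cycle cover: `x s = 0` and every `s`-cycle `C`
satisfies `x(V(C)) ≥ 1` (vertices counted with multiplicity). -/
def IsSCycleCover (G : Multigraph V E) (s : V) (x : V → ℝ) : Prop :=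
  (∀ v, 0 ≤ x v) ∧ x s = 0 ∧
    ∀ W : G.Walk, W.IsSCycle s → 1 ≤ ∑ i, x (W.verts i)

/-- A function is half-integral if it takes values in `{0, 1/2, 1}`. -/
def HalfIntegral (x : V → ℝ) : Prop := ∀ v, x v = 0 ∨ x v = 1/2 ∨ x v = 1

/-- A minimum `s`-cycle cover. -/
def IsMinSCycleCover [Fintype V] (G : Multigraph V E) (s : V) (x : V → ℝ) : Prop :=
  G.IsSCycleCover s x ∧ ∀ x' : V → ℝ, G.IsSCycleCover s x' → ∑ v, x v ≤ ∑ v, x' v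

/-- An `s`-cycle packing: a nonnegative, finitely supported weighting of the
`s`-cycles such that every vertex `v ≠ s` is used (with multiplicity) with
total weight at most `1`. -/
def IsSCyclePacking (G : Multigraph V E) (s : V) (y : G.Walk →₀ ℝ) : Prop :=
  (∀ W, 0 ≤ y W) ∧ (∀ W, y W ≠ 0 → W.IsSCycle s) ∧
    ∀ v : V, v ≠ s → ∑ W ∈ y.support, (W.vertCount v : ℝ) * y W ≤ 1

/-- The size of an `s`-cycle packing. -/
noncomputable def packingSize {G : Multigraph V E} (y : G.Walk →₀ ℝ) : ℝ :=
  ∑ W ∈ y.support, y W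

/-- Number of edges incident to `v` with `f`-value 1. -/
noncomputable def cnt1 (G : Multigraph V E) (f : E → ℝ) (v : V) : ℕ :=
  Nat.card {e : E // v ∈ G.ends e ∧ f e = 1}

/-- Number of edges incident to `v` with `f`-value 1/2. -/
noncomputable def cntH (G : Multigraph V E) (f : E → ℝ) (v : V) : ℕ :=
  Nat.card {e : E // v ∈ G.ends e ∧ f e = 1/2}

/-- type-O: all incident edges have `f`-value 0. -/
def IsTypeO (G : Multigraph V E) (f : E → ℝ) (v : V) : Prop :=
  ∀ e : E, v ∈ G.ends e → f e = 0

/-- type-I: exactly two incident edges have value 1 and none has value 1/2. -/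
def IsTypeI (G : Multigraph V E) (f : E → ℝ) (v : V) : Prop :=
  G.cnt1 f v = 2 ∧ G.cntH f v = 0

/-- type-H: no incident edge has value 1 and exactly two have value 1/2. -/
def IsTypeH (G : Multigraph V E) (f : E → ℝ) (v : V) : Prop :=
  G.cnt1 f v = 0 ∧ G.cntH f v = 2

/-- type-T: exactly one incident edge has value 1 and exactly two have value 1/2. -/
def IsTypeT (G : Multigraph V E) (f : E → ℝ) (v : V) : Prop :=
  G.cnt1 f v = 1 ∧ G.cntH f v = 2

/-- A basic `s`-cycle packing: `f : E → {0,1/2,1}` with `f(e) ∈ {0,1}` on edges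
incident to `s`, every vertex `v ≠ s` of one of the four types O, I, H, T, and
every cycle consisting of edges of value 1/2 (i.e. every half-integral cycle)
containing an odd number of type-T vertices. -/
def IsBasicSCyclePacking (G : Multigraph V E) (s : V) (f : E → ℝ) : Prop :=
  (∀ e : E, f e = 0 ∨ f e = 1/2 ∨ f e = 1) ∧
  (∀ e : E, s ∈ G.ends e → f e = 0 ∨ f e = 1) ∧
  (∀ v : V, v ≠ s →
    G.IsTypeO f v ∨ G.IsTypeI f v ∨ G.IsTypeH f v ∨ G.IsTypeT f v) ∧
  (∀ W : G.Walk, W.IsCycle → (∀ j, f (W.edges j) = 1/2) →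
    Odd (Nat.card {i : Fin W.len // G.IsTypeT f (W.verts i.castSucc)}))

/-- The size of a basic `s`-cycle packing: `(1/2) · Σ_{e ∈ δ(s)} f(e)`. -/
noncomputable def basicSize [Fintype E] (G : Multigraph V E) (s : V) (f : E → ℝ) : ℝ :=
  (1/2) * ∑ e : E, Set.indicator {e' : E | s ∈ G.ends e'} f e

/-- `u` and `v` are connected by a walk avoiding the vertex set `S` and the
edge set `F` (or `u = v`). -/
def Reach (G : Multigraph V E) (S : Set V) (F : Set E) (u v : V) : Prop :=
  u = v ∨ ∃ W : G.Walk, (∀ i, W.verts i ∉ S) ∧ (∀ j, W.edges j ∉ F) ∧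
    W.start = u ∧ W.finish = v

/-- The edge `e` belongs to the set `B` of the `s`-cycle cover reduction with
respect to the set `X`: `e` joins `s` to some `u ∉ X`, `e` is a bridge of
`G − X` (its endpoints are disconnected in `G − X − e`), and the connected
component of `u` in `G − X − s` is a tree (no cycle of `G − X − s` passes
through a vertex reachable from `u` in `G − X − s`). -/
def InB (G : Multigraph V E) (s : V) (X : Set V) (e : E) : Prop :=
  ∃ u : V, G.ends e = s(s, u) ∧ u ≠ s ∧ u ∉ X ∧ s ∉ X ∧
    ¬ G.Reach X {e} s u ∧
    ¬ ∃ W : G.Walk, W.IsCycle ∧ (∀ i, W.verts i ∉ X ∪ {s}) ∧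
        G.Reach (X ∪ {s}) ∅ u W.start

/-- The graph `G' = (V, E')` obtained from `G` by the `s`-cycle cover
reduction with respect to a half-integral `s`-cycle cover `x`: with
`X = x⁻¹(1)`, insert a double edge (two new parallel edges) between `s` and
each `v ∈ X`, and delete the edges of `B`. -/
def reduced (G : Multigraph V E) (s : V) (x : V → ℝ) :
    Multigraph V ({e : E // ¬ G.InB s {v : V | x v = 1} e} ⊕ ({v : V // x v = 1} × Bool)) where
  ends := fun e =>
    match e with
    | .inl e' => G.ends e'.val
    | .inr p => s(s, p.1.val)

/-- The graph `G − s` obtained by deleting the vertex `s` and all incident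
edges (the vertex `s` is kept as an isolated vertex). -/
def deleteVertex (G : Multigraph V E) (s : V) :
    Multigraph V {e : E // s ∉ G.ends e} where
  ends := fun e => G.ends e.val

/-- An `f`-augmenting walk for a basic `s`-cycle packing `f`:
(1) it starts at `s`; (2) its first edge has value 0; (3) its edges are
pairwise distinct; (4) its vertices `v₀,…,v_{l-1}` are pairwise distinct;
(5) each interior vertex `vᵢ` (`1 ≤ i ≤ l-1`) is type-O, or type-I with
`f(e) = 1` for at least one of `e ∈ {eᵢ, e_{i+1}}`; (6) if the last vertex
`v_l` equals `vᵢ` for some `i < l` then: `v_l = s` and `f(e_l) = 0`, or `v_l`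
is type-O, or `v_l` is type-I and `f(e) = 1` for at least one of
`e ∈ {eᵢ, e_l}`; (7) if `v_l` is a new vertex then it is type-H or type-T. -/
def IsAugmentingWalk (G : Multigraph V E) (s : V) (f : E → ℝ) (W : G.Walk) : Prop :=
  W.start = s ∧
  f (W.edges ⟨0, W.len_pos⟩) = 0 ∧
  Function.Injective W.edges ∧
  Function.Injective (fun i : Fin W.len => W.verts i.castSucc) ∧
  (∀ i : Fin W.len, 0 < i.val →
    (G.IsTypeO f (W.verts i.castSucc) ∨
      (G.IsTypeI f (W.verts i.castSucc) ∧
        (f (W.edges ⟨i.val - 1, Nat.lt_of_le_of_lt (Nat.sub_le _ _) i.isLt⟩) = 1 ∨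
          f (W.edges i) = 1)))) ∧
  (∀ i : Fin W.len, W.finish = W.verts i.castSucc →
    ((W.finish = s ∧ f (W.edges ⟨W.len - 1, Nat.sub_lt W.len_pos Nat.one_pos⟩) = 0) ∨
     (W.finish ≠ s ∧ G.IsTypeO f W.finish) ∨
     (W.finish ≠ s ∧ G.IsTypeI f W.finish ∧
       (f (W.edges ⟨i.val - 1, Nat.lt_of_le_of_lt (Nat.sub_le _ _) i.isLt⟩) = 1 ∨
         f (W.edges ⟨W.len - 1, Nat.sub_lt W.len_pos Nat.one_pos⟩) = 1)))) ∧
  ((∀ i : Fin W.len, W.finish ≠ W.verts i.castSucc) →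
    (G.IsTypeH f W.finish ∨ G.IsTypeT f W.finish))

/-- `g = f_W` is obtained from `f` by augmenting along the walk `W`.
If `v_l = s` (so `h = l`), the values of `f` on `e₁,…,e_l` are flipped
(`f ↦ 1 − f`).  If `v_l ≠ s` equals an earlier vertex `vᵢ` (so `h = i`), the
values on `e₁,…,e_h` are flipped and the values on `e_{h+1},…,e_l` are set to
`1/2`.  If `v_l ≠ s` is a new vertex (type-H or type-T, with `h = l`), the
values on `e₁,…,e_l` are flipped and, on the half-integral cycle `C` of `v_l`
(traversed from `t₀ = v_l` in either direction), the edges of the segment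
`Pᵢ` between consecutive markers `tᵢ, t_{i+1}` (the markers being `v_l`
together with the type-T vertices of `C`) receive value `0` for even `i` and
`1` for odd `i`; the segment index of an edge is the number of type-T
vertices strictly preceding it along the traversal.  All other edges keep
their `f`-value. -/
def AugmentedAlong (G : Multigraph V E) (s : V) (f : E → ℝ) (W : G.Walk) (g : E → ℝ) : Prop :=
  -- Case A : the walk returns to `s`.
  (W.finish = s ∧
    (∀ j : Fin W.len, g (W.edges j) = 1 - f (W.edges j)) ∧
    (∀ e : E, (∀ j, e ≠ W.edges j) → g e = f e)) ∨
  -- Case B : the last vertex is a repeated vertex `vᵢ ≠ s` (type-O or type-I).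
  (W.finish ≠ s ∧
    (∃ i : Fin W.len, W.finish = W.verts i.castSucc ∧
      (∀ j : Fin W.len, j.val < i.val → g (W.edges j) = 1 - f (W.edges j)) ∧
      (∀ j : Fin W.len, i.val ≤ j.val → g (W.edges j) = 1/2) ∧
      (∀ e : E, (∀ j, e ≠ W.edges j) → g e = f e))) ∨
  -- Case C : the last vertex is a new vertex of type-H or type-T.
  (W.finish ≠ s ∧ (∀ i : Fin W.len, W.finish ≠ W.verts i.castSucc) ∧
    (∃ C : G.Walk, C.IsCycle ∧ C.verts 0 = W.finish ∧
      (∀ j, f (C.edges j) = 1/2) ∧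
      (∀ j : Fin W.len, g (W.edges j) = 1 - f (W.edges j)) ∧
      (∀ j : Fin C.len,
        g (C.edges j) =
          if Even (Nat.card {m : Fin C.len //
              1 ≤ m.val ∧ m.val ≤ j.val ∧ G.IsTypeT f (C.verts m.castSucc)})
          then 0 else 1) ∧
      (∀ e : E, (∀ j, e ≠ W.edges j) → (∀ j, e ≠ C.edges j) → g e = f e)))


end Multigraph

/-!
Replace every edge `e` by `2 f(e)` parallel copies. At a vertex `v ≠ s` this gives `0`, `2` or `4`
incident copies, at most half of which belong to the same edge, so they can be matched in pairs of
copies of different edges. Leaving `s` along a copy and continuing at each vertex along the matched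
copy traces a walk that returns to `s`. It makes no U-turn, and it uses every copy at most once: a
copy used in both directions would force the walk to reverse somewhere in between. Hence it is an
`s`-cycle. The `2 f(δ(s))` walks obtained in this way start with different copies and together visit
a vertex `v ≠ s` at most `2 f(δ(v)) ≤ 4` times, so giving each of them weight `1/4` is a packing, of
size `f(δ(s)) / 2`.
-/

section Matching

theorem apply_castAdd_ne_apply_natAdd {β : Type*} [PartialOrder β] {m : ℕ} {p : Fin (m + m) → β}
    (hp : Monotone p) (hfiber : ∀ b, Nat.card {j // p j = b} ≤ m) (i : Fin m) :
    p (Fin.castAdd m i) ≠ p (Fin.natAdd m i) := by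
  intro heq
  have hconst : ∀ j ∈ Finset.Icc (Fin.castAdd m i) (Fin.natAdd m i), p j = p (Fin.castAdd m i) :=
    fun j hj => le_antisymm (heq ▸ hp (Finset.mem_Icc.1 hj).2) (hp (Finset.mem_Icc.1 hj).1)
  have hcard : (Finset.Icc (Fin.castAdd m i) (Fin.natAdd m i)).card = m + 1 := by
    simp only [Fin.card_Icc, Fin.val_natAdd, Fin.val_castAdd]
    omega
  have hle : m + 1 ≤ m := calc
    m + 1 = Nat.card (Finset.Icc (Fin.castAdd m i) (Fin.natAdd m i)) := by
      rw [Nat.card_eq_finsetCard, hcard]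
    _ ≤ Nat.card {j // p j = p (Fin.castAdd m i)} :=
      Nat.card_le_card_of_injective _ (Subtype.impEmbedding _ _ hconst).injective
    _ ≤ m := hfiber _
  omega

theorem exists_involutive_apply_ne {α β : Type*} [Finite α] (p : α → β)
    (heven : Even (Nat.card α)) (hhalf : ∀ b, 2 * Nat.card {a // p a = b} ≤ Nat.card α) :
    ∃ μ : α → α, Function.Involutive μ ∧ ∀ a, p (μ a) ≠ p a := by
  classical
  obtain ⟨m, hm⟩ := heven
  let _ : LinearOrder β := linearOrderOfSTO WellOrderingRel
  let e : α ≃ Fin (m + m) := Finite.equivFinOfCardEq hm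
  let q : Fin (m + m) ≃ α := (Tuple.sort (p ∘ e.symm)).trans e.symm
  have hfiber (b : β) : Nat.card {j // (p ∘ q) j = b} ≤ m := by
    have := hhalf b
    rw [Nat.card_congr (q.subtypeEquiv fun _ => Iff.rfl : {j // (p ∘ q) j = b} ≃ {a // p a = b})]
    omega
  have hshift (i : Fin m) : p (q (Fin.castAdd m i)) ≠ p (q (Fin.natAdd m i)) :=
    apply_castAdd_ne_apply_natAdd (p := p ∘ q) (Tuple.monotone_sort (p ∘ e.symm)) hfiber i
  -- With the elements sorted by `p`, fibres are intervals of length at most `m`, so a shift by `m`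
  -- leaves every fibre.
  refine ⟨fun a => q (finAddFlip (q.symm a)), fun a => ?_, fun a => ?_⟩
  · obtain ⟨i, rfl⟩ := q.surjective a
    induction i using Fin.addCases <;>
      simp only [Equiv.symm_apply_apply, finAddFlip_apply_castAdd, finAddFlip_apply_natAdd]
  · obtain ⟨i, rfl⟩ := q.surjective a
    induction i using Fin.addCases with
    | left i => simpa only [Equiv.symm_apply_apply, finAddFlip_apply_castAdd] using (hshift i).symm
    | right i => simpa only [Equiv.symm_apply_apply, finAddFlip_apply_natAdd] using hshift i

theorem exists_involutive_of_fiberwise {α β : Type*} (p : α → β) (r : α → α → Prop)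
    (h : ∀ b, ∃ μ : {a // p a = b} → {a // p a = b},
      Function.Involutive μ ∧ ∀ a, r (μ a) a) :
    ∃ μ : α → α, Function.Involutive μ ∧ (∀ a, p (μ a) = p a) ∧ ∀ a, r (μ a) a := by
  choose μ hμ hr using h
  have hglue (a : α) (b : β) (hb : p a = b) : μ (p a) ⟨a, rfl⟩ = (μ b ⟨a, hb⟩ : α) := by
    subst hb; rfl
  refine ⟨fun a => μ (p a) ⟨a, rfl⟩, fun a => ?_, fun a => (μ (p a) ⟨a, rfl⟩).2,
    fun a => hr (p a) ⟨a, rfl⟩⟩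
  exact (hglue _ (p a) (μ (p a) ⟨a, rfl⟩).2).trans (congrArg Subtype.val (hμ (p a) ⟨a, rfl⟩))

end Matching

section Dynamics

variable {α : Type*} {φ : α → α} {S : Set α} {x y : α} {i j : ℕ}

/-- The first positive time at which the `φ`-orbit of `x` is in `S`; it is `0` if there is none. -/
noncomputable def firstReturn (φ : α → α) (S : Set α) (x : α) : ℕ :=
  sInf {n | 0 < n ∧ φ^[n] x ∈ S}

theorem firstReturn_spec [Finite α] (hφ : Function.Injective φ) (hx : x ∈ S) :
    0 < firstReturn φ S x ∧ φ^[firstReturn φ S x] x ∈ S := by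
  obtain ⟨n, hn, hperiod⟩ := hφ.mem_periodicPts x
  exact Nat.sInf_mem (s := {n | 0 < n ∧ φ^[n] x ∈ S}) ⟨n, hn, hperiod.eq.symm ▸ hx⟩

theorem iterate_notMem_of_lt_firstReturn (hi : 0 < i) (hlt : i < firstReturn φ S x) :
    φ^[i] x ∉ S :=
  fun hmem => Nat.notMem_of_lt_sInf hlt ⟨hi, hmem⟩

theorem eq_and_eq_of_iterate_eq_of_lt_firstReturn (hφ : Function.Injective φ)
    (hx : x ∈ S) (hy : y ∈ S) (hi : i < firstReturn φ S x) (hj : j < firstReturn φ S y)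
    (h : φ^[i] x = φ^[j] y) : x = y ∧ i = j := by
  wlog hij : i ≤ j generalizing x y i j
  · exact (this hy hx hj hi h.symm (le_of_not_ge hij)).imp Eq.symm Eq.symm
  obtain ⟨k, rfl⟩ := Nat.exists_eq_add_of_le hij
  rw [Function.iterate_add_apply] at h
  obtain rfl : x = φ^[k] y := hφ.iterate i h
  obtain rfl : k = 0 := by
    by_contra hk
    exact iterate_notMem_of_lt_firstReturn (Nat.pos_of_ne_zero hk) (by omega) hx
  exact ⟨rfl, rfl⟩

theorem ne_iterate_comp_of_involutive {τ ρ : α → α} (hτ : Function.Involutive τ)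
    (hρ : Function.Involutive ρ) (hρ_ne : ∀ x, ρ x ≠ x) (hτ_ne : ∀ x ∉ S, τ x ≠ x) :
    ∀ (n : ℕ) (x : α), (∀ i, 0 < i → i ≤ n → (τ ∘ ρ)^[i] x ∉ S) → ρ x ≠ (τ ∘ ρ)^[n] x
  | 0, x, _, h => hρ_ne x h
  | 1, x, hS, h => hτ_ne (ρ x) (h ▸ hS 1 one_pos le_rfl) h.symm
  | n + 2, x, hS, h => by
    -- With `φ = τ ∘ ρ` one has `φ ∘ ρ ∘ φ = ρ`, so both ends of the segment may move inwards.
    have hconj : ρ x = (τ ∘ ρ) (ρ ((τ ∘ ρ) x)) := by simp [hρ _, hτ _]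
    rw [hconj, Function.iterate_succ_apply', Function.iterate_succ_apply] at h
    refine ne_iterate_comp_of_involutive hτ hρ hρ_ne hτ_ne n ((τ ∘ ρ) x) (fun i _ hin => ?_)
      ((hτ.injective.comp hρ.injective) h)
    exact hS (i + 1) i.succ_pos (by omega)

end Dynamics

namespace Multigraph

variable {V E : Type}

theorem LoopFree.exists_mem_ne {G : Multigraph V E} (hloop : G.LoopFree) (s : V) (e : E) :
    ∃ v ∈ G.ends e, v ≠ s := by
  induction h : G.ends e with
  | _ a b =>
    have hab : a ≠ b := by simpa [h] using hloop e
    by_cases ha : a = s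
    · exact ⟨b, Sym2.mem_mk_right a b, ha ▸ hab.symm⟩
    · exact ⟨a, Sym2.mem_mk_left a b, ha⟩

/-- The sum `w(δ(v))` of the weights of the edges incident to `v`. -/
noncomputable def cutSum [Fintype E] {R : Type*} [AddCommMonoid R] (G : Multigraph V E)
    (w : E → R) (v : V) : R :=
  ∑ e, {e | v ∈ G.ends e}.indicator w e

theorem natCast_cutSum [Fintype E] {R : Type*} [Semiring R] (G : Multigraph V E) (k : E → ℕ)
    (v : V) : ((G.cutSum k v : ℕ) : R) = G.cutSum (fun e => (k e : R)) v := by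
  classical
  simp only [cutSum, Set.indicator_apply, Nat.cast_sum, Nat.cast_ite, Nat.cast_zero]

theorem cutSum_const_mul [Fintype E] {R : Type*} [NonUnitalNonAssocSemiring R]
    (G : Multigraph V E) (c : R) (w : E → R) (v : V) :
    G.cutSum (fun e => c * w e) v = c * G.cutSum w v := by
  classical
  simp only [cutSum, Set.indicator_apply, Finset.mul_sum, mul_ite, mul_zero]

section Dart

variable {G : Multigraph V E} {k : E → ℕ}

/-- A dart of the multigraph obtained from `G` by taking `k e` parallel copies of each edge `e`:
the copy of `edge` with number `index`, traversed from its endpoint `tail`. -/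
@[ext]
structure Dart (G : Multigraph V E) (k : E → ℕ) where
  tail : V
  edge : E
  index : ℕ
  index_lt : index < k edge
  tail_mem : tail ∈ G.ends edge

namespace Dart

/-- The same copy of the same edge, traversed from its other endpoint. -/
noncomputable def rev (d : G.Dart k) : G.Dart k where
  tail := Sym2.Mem.other d.tail_mem
  edge := d.edge
  index := d.index
  index_lt := d.index_lt
  tail_mem := Sym2.other_mem d.tail_mem

theorem ends_edge (d : G.Dart k) : G.ends d.edge = s(d.tail, d.rev.tail) :=
  (Sym2.other_spec d.tail_mem).symm

theorem rev_involutive : Function.Involutive (rev : G.Dart k → G.Dart k) :=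
  fun d => Dart.ext (Sym2.other_invol d.tail_mem _) rfl rfl

theorem rev_ne (hloop : G.LoopFree) (d : G.Dart k) : d.rev ≠ d :=
  fun h => Sym2.other_ne (hloop d.edge) d.tail_mem (congrArg tail h)

theorem eq_or_eq_rev {d d' : G.Dart k} (hedge : d.edge = d'.edge) (hindex : d.index = d'.index) :
    d = d' ∨ d = d'.rev := by
  have hmem : d.tail ∈ s(d'.tail, d'.rev.tail) := by
    rw [← ends_edge, ← hedge]
    exact d.tail_mem
  exact (Sym2.mem_iff.1 hmem).imp (Dart.ext · hedge hindex) (Dart.ext · hedge hindex)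

instance [Finite E] : Finite (G.Dart k) := by
  classical
  have (e : E) : Finite {v // v ∈ G.ends e} :=
    .of_equiv (G.ends e).toFinset (Equiv.subtypeEquivRight fun _ => Sym2.mem_toFinset)
  let toSigma (d : G.Dart k) : Σ e, Fin (k e) × {v // v ∈ G.ends e} :=
    ⟨d.edge, ⟨d.index, d.index_lt⟩, ⟨d.tail, d.tail_mem⟩⟩
  exact .of_injective toSigma fun d d' h =>
    Dart.ext (congrArg (fun a => (a.2.2 : V)) h) (congrArg Sigma.fst h)
      (congrArg (fun a => (a.2.1 : ℕ)) h)

theorem card_tail_eq [Fintype E] (v : V) :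
    Nat.card {d : G.Dart k // d.tail = v} = G.cutSum k v := by
  classical
  let toCopy : {d : G.Dart k // d.tail = v} ≃ Σ e : {e // v ∈ G.ends e}, Fin (k e) :=
    { toFun := fun d =>
        ⟨⟨d.1.edge, by simpa only [← d.2] using d.1.tail_mem⟩, d.1.index, d.1.index_lt⟩
      invFun := fun c => ⟨⟨v, c.1, c.2, c.2.2, c.1.2⟩, rfl⟩
      left_inv := by rintro ⟨d, rfl⟩; rfl
      right_inv := fun c => rfl }
  simp only [Nat.card_congr toCopy, Nat.card_sigma, Nat.card_fin, cutSum, Set.indicator_apply,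
    Set.mem_ofPred_eq, ← Finset.sum_filter]
  exact (Finset.sum_subtype _ Finset.mem_filter_univ k).symm

theorem card_le_of_index_injective {ι : Type*} (e : E) (d : ι → G.Dart k)
    (hedge : ∀ i, (d i).edge = e) (hinj : Function.Injective fun i => (d i).index) :
    Nat.card ι ≤ k e := by
  have hfin : Function.Injective fun i => (⟨(d i).index, hedge i ▸ (d i).index_lt⟩ : Fin (k e)) :=
    fun i j h => hinj (congrArg Fin.val h)
  simpa only [Nat.card_fin] using Nat.card_le_card_of_injective _ hfin

end Dart

/-- A choice, at every vertex other than `s`, of a perfect matching on the darts leaving it that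
never matches two copies of the same edge: a trail arriving at the vertex along the reverse of a
dart continues along the dart matched to it. -/
structure TransitionSystem (G : Multigraph V E) (k : E → ℕ) (s : V) where
  turn : G.Dart k → G.Dart k
  turn_involutive : Function.Involutive turn
  tail_turn : ∀ d, (turn d).tail = d.tail
  edge_turn_ne : ∀ d, d.tail ≠ s → (turn d).edge ≠ d.edge

theorem nonempty_transitionSystem [Fintype E] {s : V}
    (heven : ∀ v ≠ s, Even (G.cutSum k v))
    (hhalf : ∀ v ≠ s, ∀ e, v ∈ G.ends e → 2 * k e ≤ G.cutSum k v) :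
    Nonempty (G.TransitionSystem k s) := by
  obtain ⟨turn, hinvol, htail, hedge⟩ := exists_involutive_of_fiberwise
    (Dart.tail : G.Dart k → V) (fun d' d => d.tail ≠ s → d'.edge ≠ d.edge) fun v => by
      rcases eq_or_ne v s with rfl | hv
      · exact ⟨id, fun _ => rfl, fun d hd => absurd d.2 hd⟩
      have hfiber (e : E) : 2 * Nat.card {d : {d : G.Dart k // d.tail = v} // d.1.edge = e} ≤
          Nat.card {d : G.Dart k // d.tail = v} := by
        rcases isEmpty_or_nonempty {d : {d : G.Dart k // d.tail = v} // d.1.edge = e} with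
          _ | ⟨⟨⟨d, rfl⟩, rfl⟩⟩
        · simp only [Nat.card_of_isEmpty, mul_zero, zero_le]
        · rw [Dart.card_tail_eq]
          refine le_trans (Nat.mul_le_mul_left 2 ?_) (hhalf d.tail hv d.edge d.tail_mem)
          exact Dart.card_le_of_index_injective d.edge (fun d' => d'.1.1) (fun d' => d'.2)
            fun a b h => Subtype.ext (Subtype.ext
              (Dart.ext (a.1.2.trans b.1.2.symm) (a.2.trans b.2.symm) h))
      obtain ⟨μ, hμ, hne⟩ := exists_involutive_apply_ne
        (fun d : {d : G.Dart k // d.tail = v} => d.1.edge)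
        (by rw [Dart.card_tail_eq]; exact heven v hv) hfiber
      exact ⟨μ, hμ, fun d _ => hne d⟩
  exact ⟨⟨turn, hinvol, htail, hedge⟩⟩

namespace TransitionSystem

variable {s : V} (τ : G.TransitionSystem k s)

/-- The dart that follows `d` on the trail prescribed by the transition system. -/
noncomputable def next : G.Dart k → G.Dart k := τ.turn ∘ Dart.rev

theorem next_injective : Function.Injective τ.next :=
  τ.turn_involutive.injective.comp Dart.rev_involutive.injective

theorem tail_next (d : G.Dart k) : (τ.next d).tail = d.rev.tail :=
  τ.tail_turn d.rev

theorem edge_next_ne {d : G.Dart k} (h : (τ.next d).tail ≠ s) : (τ.next d).edge ≠ d.edge :=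
  τ.edge_turn_ne d.rev (τ.tail_next d ▸ h)

/-- The first positive time at which the trail starting with `d` is back at `s`. -/
noncomputable def returnTime (d : G.Dart k) : ℕ := firstReturn τ.next {x | x.tail = s} d

theorem tail_iterate_next_ne {d : G.Dart k} {i : ℕ} (hi : 0 < i) (hlt : i < τ.returnTime d) :
    (τ.next^[i] d).tail ≠ s :=
  iterate_notMem_of_lt_firstReturn hi hlt

theorem eq_and_eq_of_iterate_next_eq {d d' : G.Dart k} {i j : ℕ} (hd : d.tail = s)
    (hd' : d'.tail = s) (hi : i < τ.returnTime d) (hj : j < τ.returnTime d')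
    (h : τ.next^[i] d = τ.next^[j] d') : d = d' ∧ i = j :=
  eq_and_eq_of_iterate_eq_of_lt_firstReturn τ.next_injective hd hd' hi hj h

theorem rev_iterate_next_ne (hloop : G.LoopFree) {d : G.Dart k} {i j : ℕ}
    (hi : i < τ.returnTime d) (hj : j < τ.returnTime d) :
    (τ.next^[i] d).rev ≠ τ.next^[j] d := by
  wlog hij : i ≤ j generalizing i j
  · exact fun h => this hj hi (le_of_not_ge hij) (Dart.rev_involutive.eq_iff.1 h).symm
  obtain ⟨n, rfl⟩ := Nat.exists_eq_add_of_le' hij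
  rw [Function.iterate_add_apply]
  have hturn_ne : ∀ x ∉ {x : G.Dart k | x.tail = s}, τ.turn x ≠ x :=
    fun x hx h => τ.edge_turn_ne x hx (congrArg Dart.edge h)
  refine ne_iterate_comp_of_involutive τ.turn_involutive Dart.rev_involutive (Dart.rev_ne hloop)
    hturn_ne n _ fun l hl hln => ?_
  change (τ.next^[l] (τ.next^[i] d)).tail ≠ s
  rw [← Function.iterate_add_apply]
  exact τ.tail_iterate_next_ne (by omega) (by omega)

theorem eq_of_iterate_next_same_copy (hloop : G.LoopFree) {d : G.Dart k} (hd : d.tail = s) {i j : ℕ}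
    (hi : i < τ.returnTime d) (hj : j < τ.returnTime d)
    (hedge : (τ.next^[i] d).edge = (τ.next^[j] d).edge)
    (hindex : (τ.next^[i] d).index = (τ.next^[j] d).index) : i = j := by
  rcases Dart.eq_or_eq_rev hedge hindex with h | h
  · exact (τ.eq_and_eq_of_iterate_next_eq hd hd hi hj h).2
  · exact absurd h.symm (τ.rev_iterate_next_ne hloop hj hi)

section Trace

variable [Finite E]

theorem returnTime_spec {d : G.Dart k} (hd : d.tail = s) :
    0 < τ.returnTime d ∧ (τ.next^[τ.returnTime d] d).tail = s :=
  firstReturn_spec τ.next_injective hd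

/-- The closed walk at `s` that starts with the dart `d` and follows the transition system until
it first returns to `s`. -/
noncomputable def trace (d : {d : G.Dart k // d.tail = s}) : G.Walk where
  len := τ.returnTime d
  len_pos := (τ.returnTime_spec d.2).1
  verts i := (τ.next^[i] d.1).tail
  edges i := (τ.next^[i] d.1).edge
  valid i := by
    rw [Dart.ends_edge, Fin.val_succ, Function.iterate_succ_apply', tail_next, Fin.val_castSucc]

theorem trace_isSCycle (hloop : G.LoopFree) (hk : ∀ e, k e ≤ 2)
    (d : {d : G.Dart k // d.tail = s}) : (τ.trace d).IsSCycle s := by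
  refine ⟨d.2, (τ.returnTime_spec d.2).2, fun i h0 hlast => ?_, fun i j hij => ?_, fun e => ?_⟩
  · exact τ.tail_iterate_next_ne (Fin.pos_iff_ne_zero.2 h0) (Fin.lt_last_iff_ne_last.2 hlast)
  · have hj : τ.next^[(j : ℕ)] d.1 = τ.next (τ.next^[(i : ℕ)] d.1) := by
      rw [← hij, Function.iterate_succ_apply']
    have hne : (τ.next^[(j : ℕ)] d.1).tail ≠ s := τ.tail_iterate_next_ne (by omega) j.2
    change (τ.next^[(i : ℕ)] d.1).edge ≠ (τ.next^[(j : ℕ)] d.1).edge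
    rw [hj] at hne ⊢
    exact (τ.edge_next_ne hne).symm
  · refine (Dart.card_le_of_index_injective e (fun i => τ.next^[(i.1 : ℕ)] d.1) (fun i => i.2)
      fun i j h => ?_).trans (hk e)
    exact Subtype.ext (Fin.ext
      (τ.eq_of_iterate_next_same_copy hloop d.2 i.1.2 j.1.2 (i.2.trans j.2.symm) h))

theorem sum_vertCount_trace_le [Fintype {d : G.Dart k // d.tail = s}] {v : V} (hv : v ≠ s) :
    ∑ d, (τ.trace d).vertCount v ≤ Nat.card {d : G.Dart k // d.tail = v} := by
  have hlt (d : {d : G.Dart k // d.tail = s})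
      (i : {i : Fin ((τ.trace d).len + 1) // (τ.trace d).verts i = v}) :
      (i.1 : ℕ) < τ.returnTime d.1 := by
    refine Fin.lt_last_iff_ne_last.2 fun hlast => hv ?_
    rw [← i.2, hlast]
    exact (τ.returnTime_spec d.2).2
  let visit : (Σ d, {i : Fin ((τ.trace d).len + 1) // (τ.trace d).verts i = v}) →
      {d : G.Dart k // d.tail = v} := fun q => ⟨τ.next^[(q.2.1 : ℕ)] q.1.1, q.2.2⟩
  have hvisit : Function.Injective visit := by
    rintro ⟨⟨d, hd⟩, i⟩ ⟨⟨d', hd'⟩, j⟩ h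
    obtain ⟨rfl, hij⟩ := τ.eq_and_eq_of_iterate_next_eq hd hd' (hlt _ i) (hlt _ j)
      (congrArg Subtype.val h)
    rw [Subtype.ext (Fin.ext hij : i.1 = j.1)]
  calc ∑ d, (τ.trace d).vertCount v
      = Nat.card (Σ d, {i : Fin ((τ.trace d).len + 1) // (τ.trace d).verts i = v}) :=
        Nat.card_sigma.symm
    _ ≤ Nat.card {d : G.Dart k // d.tail = v} := Nat.card_le_card_of_injective visit hvisit

end Trace

end TransitionSystem

end Dart

section Packing

variable {G : Multigraph V E} {s : V}

theorem exists_isSCyclePacking_of_family {ι : Type*} [Fintype ι] (W : ι → G.Walk) (w : ι → ℝ)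
    (hw : ∀ i, 0 ≤ w i) (hW : ∀ i, (W i).IsSCycle s)
    (hcap : ∀ v ≠ s, ∑ i, ((W i).vertCount v : ℝ) * w i ≤ 1) :
    ∃ y : G.Walk →₀ ℝ, G.IsSCyclePacking s y ∧ packingSize y = ∑ i, w i := by
  classical
  let y : G.Walk →₀ ℝ := ∑ i, Finsupp.single (W i) (w i)
  have hsum (c : G.Walk → ℝ) : ∑ C ∈ y.support, c C * y C = ∑ i, c (W i) * w i := by
    change y.sum (fun C r => c C * r) = _
    rw [← Finsupp.sum_finsetSum_index (fun _ => mul_zero _) (fun _ _ _ => mul_add _ _ _)]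
    simp only [Finsupp.sum_single_index, mul_zero]
  refine ⟨y, ⟨fun C => ?_, fun C hC => ?_, fun v hv => ?_⟩, ?_⟩
  · have hy : 0 ≤ y := Finset.sum_nonneg fun i _ => Finsupp.single_nonneg.2 (hw i)
    exact hy C
  · rw [Finsupp.finsetSum_apply] at hC
    obtain ⟨i, -, hi⟩ := Finset.exists_ne_zero_of_sum_ne_zero hC
    obtain rfl : W i = C := by
      by_contra hne
      exact hi (Finsupp.single_eq_of_ne' hne)
    exact hW i
  · rw [hsum]
    exact hcap v hv
  · simpa only [packingSize, one_mul] using hsum fun _ => 1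

theorem exists_isSCyclePacking_of_multiplicity [Fintype E] (hloop : G.LoopFree) (k : E → ℕ) (N : ℕ)
    (hk : ∀ e, k e ≤ 2) (heven : ∀ v ≠ s, Even (G.cutSum k v))
    (hhalf : ∀ v ≠ s, ∀ e, v ∈ G.ends e → 2 * k e ≤ G.cutSum k v)
    (hcap : ∀ v ≠ s, G.cutSum k v ≤ N) :
    ∃ y : G.Walk →₀ ℝ, G.IsSCyclePacking s y ∧ packingSize y = G.cutSum k s / N := by
  obtain ⟨τ⟩ := nonempty_transitionSystem heven hhalf
  let _ : Fintype {d : G.Dart k // d.tail = s} := Fintype.ofFinite _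
  obtain ⟨y, hy, hsize⟩ := exists_isSCyclePacking_of_family τ.trace (fun _ => (N : ℝ)⁻¹)
    (fun _ => by positivity) (τ.trace_isSCycle hloop hk) fun v hv => by
      rw [← Finset.sum_mul, ← div_eq_mul_inv]
      refine div_le_one_of_le₀ ?_ N.cast_nonneg
      have hcount : ∑ d, (τ.trace d).vertCount v ≤ N := by
        refine (τ.sum_vertCount_trace_le hv).trans ?_
        rw [Dart.card_tail_eq]
        exact hcap v hv
      exact_mod_cast hcount
  refine ⟨y, hy, hsize.trans ?_⟩
  rw [Finset.sum_const, Finset.card_univ, ← Nat.card_eq_fintype_card, Dart.card_tail_eq,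
    nsmul_eq_mul, div_eq_mul_inv]

end Packing

section Basic

variable {G : Multigraph V E} {s : V} {f : E → ℝ} {v : V}

theorem cutSum_eq_cnt1_add_cntH [Fintype E] (hf : ∀ e, f e = 0 ∨ f e = 1 / 2 ∨ f e = 1) (v : V) :
    G.cutSum f v = G.cnt1 f v + G.cntH f v / 2 := by
  classical
  simp only [cutSum, cnt1, cntH, Nat.card_eq_fintype_card, Fintype.card_subtype,
    Finset.natCast_card_filter, Finset.sum_div, ← Finset.sum_add_distrib, Set.indicator_apply]
  refine Finset.sum_congr rfl fun e _ => ?_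
  by_cases hv : v ∈ G.ends e <;> rcases hf e with h | h | h <;> norm_num [h, hv]

theorem IsTypeO.cutSum_eq_zero [Fintype E] (hO : G.IsTypeO f v) : G.cutSum f v = 0 :=
  Finset.sum_eq_zero fun _ _ => Set.indicator_apply_eq_zero.2 (hO _)

theorem IsTypeI.cutSum_eq_two [Fintype E] (hf : ∀ e, f e = 0 ∨ f e = 1 / 2 ∨ f e = 1)
    (hI : G.IsTypeI f v) : G.cutSum f v = 2 := by
  rw [cutSum_eq_cnt1_add_cntH hf, hI.1, hI.2]
  norm_num

theorem IsTypeH.cutSum_eq_one [Fintype E] (hf : ∀ e, f e = 0 ∨ f e = 1 / 2 ∨ f e = 1)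
    (hH : G.IsTypeH f v) : G.cutSum f v = 1 := by
  rw [cutSum_eq_cnt1_add_cntH hf, hH.1, hH.2]
  norm_num

theorem IsTypeT.cutSum_eq_two [Fintype E] (hf : ∀ e, f e = 0 ∨ f e = 1 / 2 ∨ f e = 1)
    (hT : G.IsTypeT f v) : G.cutSum f v = 2 := by
  rw [cutSum_eq_cnt1_add_cntH hf, hT.1, hT.2]
  norm_num

theorem IsTypeH.apply_ne_one [Finite E] (hH : G.IsTypeH f v) {e : E} (he : v ∈ G.ends e) :
    f e ≠ 1 := fun h =>
  Finite.card_eq_zero_iff.1 hH.1 |>.false ⟨e, he, h⟩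

namespace IsBasicSCyclePacking

theorem exists_nat_two_mul_eq (hf : G.IsBasicSCyclePacking s f) (e : E) :
    ∃ m : ℕ, 2 * f e = m := by
  rcases hf.1 e with h | h | h
  exacts [⟨0, by norm_num [h]⟩, ⟨1, by norm_num [h]⟩, ⟨2, by norm_num [h]⟩]

theorem exists_nat_cutSum_eq [Fintype E] (hf : G.IsBasicSCyclePacking s f) (hv : v ≠ s) :
    ∃ n : ℕ, n ≤ 2 ∧ G.cutSum f v = n := by
  rcases hf.2.2.1 v hv with hO | hI | hH | hT
  · exact ⟨0, zero_le_two, mod_cast hO.cutSum_eq_zero⟩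
  · exact ⟨2, le_rfl, mod_cast hI.cutSum_eq_two hf.1⟩
  · exact ⟨1, one_le_two, mod_cast hH.cutSum_eq_one hf.1⟩
  · exact ⟨2, le_rfl, mod_cast hT.cutSum_eq_two hf.1⟩

theorem two_mul_le_cutSum [Fintype E] (hf : G.IsBasicSCyclePacking s f) (hv : v ≠ s) {e : E}
    (he : v ∈ G.ends e) : 2 * f e ≤ G.cutSum f v := by
  have hle_one : f e ≤ 1 := by rcases hf.1 e with h | h | h <;> norm_num [h]
  rcases hf.2.2.1 v hv with hO | hI | hH | hT
  · rw [hO.cutSum_eq_zero, hO e he, mul_zero]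
  · linarith [hI.cutSum_eq_two hf.1]
  · have hle_half : f e ≤ 1 / 2 := by
      rcases hf.1 e with h | h | h
      exacts [by norm_num [h], h.le, absurd h (hH.apply_ne_one he)]
    linarith [hH.cutSum_eq_one hf.1]
  · linarith [hT.cutSum_eq_two hf.1]

end IsBasicSCyclePacking

end Basic

end Multigraph

theorem stmt10_basic_to_packing_general {V E : Type} [Fintype E] (G : Multigraph V E)
    (hloop : G.LoopFree) (s : V) (f : E → ℝ) (hf : ∀ e, ∃ m : ℕ, 2 * f e = m)
    (hsum : ∀ v ≠ s, ∃ n : ℕ, n ≤ 2 ∧ G.cutSum f v = n)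
    (hhalf : ∀ v ≠ s, ∀ e, v ∈ G.ends e → 2 * f e ≤ G.cutSum f v) :
    ∃ y : G.Walk →₀ ℝ, G.IsSCyclePacking s y ∧ Multigraph.packingSize y = G.basicSize s f := by
  choose k hk using hf
  have hcut (v : V) : ((G.cutSum k v : ℕ) : ℝ) = 2 * G.cutSum f v := by
    rw [Multigraph.natCast_cutSum, ← Multigraph.cutSum_const_mul]
    exact congrArg (G.cutSum · v) (funext fun e => (hk e).symm)
  have hcut_nat : ∀ v ≠ s, ∃ n ≤ 2, G.cutSum k v = n + n := fun v hv => by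
    obtain ⟨n, hn, hfn⟩ := hsum v hv
    refine ⟨n, hn, ?_⟩
    have hcast : ((G.cutSum k v : ℕ) : ℝ) = n + n := by rw [hcut, hfn, two_mul]
    exact_mod_cast hcast
  have hhalf_nat : ∀ v ≠ s, ∀ e, v ∈ G.ends e → 2 * k e ≤ G.cutSum k v := fun v hv e he => by
    have hcast : 2 * (k e : ℝ) ≤ (G.cutSum k v : ℕ) := by linarith [hhalf v hv e he, hk e, hcut v]
    exact_mod_cast hcast
  have hcap : ∀ v ≠ s, G.cutSum k v ≤ 4 := fun v hv => by
    obtain ⟨n, hn, hkn⟩ := hcut_nat v hv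
    omega
  have hk_le (e : E) : k e ≤ 2 := by
    obtain ⟨v, he, hv⟩ := hloop.exists_mem_ne s e
    linarith [hhalf_nat v hv e he, hcap v hv]
  obtain ⟨y, hy, hsize⟩ := Multigraph.exists_isSCyclePacking_of_multiplicity hloop k 4 hk_le
    (fun v hv => (hcut_nat v hv).imp fun _ h => h.2) hhalf_nat hcap
  refine ⟨y, hy, hsize.trans ?_⟩
  rw [hcut, Multigraph.basicSize, ← Multigraph.cutSum]
  norm_num
  ring

/-- a basic `s`-cycle packing of size `σ` yields an `s`-cycle
packing of size `σ`. -/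
theorem stmt10_basic_to_packing {V E : Type} [Fintype E] (G : Multigraph V E)
    (hloop : G.LoopFree) (s : V) (f : E → ℝ) (hf : G.IsBasicSCyclePacking s f)
    (σ : ℝ) (hσ : G.basicSize s f = σ) :
    ∃ y : G.Walk →₀ ℝ, G.IsSCyclePacking s y ∧ Multigraph.packingSize y = σ :=
  hσ ▸ stmt10_basic_to_packing_general G hloop s f hf.exists_nat_two_mul_eq
    (fun _ hv => hf.exists_nat_cutSum_eq hv) fun _ hv _ he => hf.two_mul_le_cutSum hv he
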